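/- arXiv:2102.09522 — 3 statements merged into one kernel-verified Lean document; each statement's English description precedes it below -/
import Mathlib

section
/- Let t ≥ 2 and j ≥ 1, let G = S_{t+2j}, and set z = (1 + (1 t+1) + (2 t+1) + ⋯ + (t t+1)) · y ∈ ℚ[G]. Then every homomorphism of left ℚ[G]-modules φ : ℚ[G]·y → Λ^{2j} U_{t+2j} satisfies φ(z) = 0; moreover, if φ is surjective then ker φ = ℚ[G]·z (the spanned submodule of the G-orbit of z). (This is the abstract form of the relation ∑_{i=1}^{t+1} (i t+1)(m_t ∘_e α_{2j+1}) = 0 in Lie graph homology.) -/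
noncomputable section

/-- The sum-of-coordinates linear functional on `ℚ^N`. -/
def sumMap (N : ℕ) : (Fin N → ℚ) →ₗ[ℚ] ℚ := ∑ i, LinearMap.proj i

/-- The standard representation `U_N = {x ∈ ℚ^N : ∑ x_i = 0}` of the symmetric group. -/
def U (N : ℕ) : Submodule ℚ (Fin N → ℚ) := LinearMap.ker (sumMap N)

lemma mem_U {N : ℕ} (x : Fin N → ℚ) : x ∈ U N ↔ ∑ i, x i = 0 := by
  simp [U, sumMap, LinearMap.mem_ker]

/-- The action of a permutation on `ℚ^N` by permuting coordinates. -/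
def permMap (N : ℕ) (σ : Equiv.Perm (Fin N)) : (Fin N → ℚ) →ₗ[ℚ] (Fin N → ℚ) :=
  LinearMap.funLeft ℚ ℚ ⇑σ⁻¹

lemma permMap_mem {N : ℕ} (σ : Equiv.Perm (Fin N)) {x : Fin N → ℚ} (hx : x ∈ U N) :
    permMap N σ x ∈ U N := by
  rw [mem_U] at hx ⊢
  simpa [permMap, LinearMap.funLeft_apply, Function.comp] using
    (Equiv.sum_comp σ⁻¹ x).trans hx

/-- The action of a permutation on the standard representation `U_N`. -/
def permU (N : ℕ) (σ : Equiv.Perm (Fin N)) : ↥(U N) →ₗ[ℚ] ↥(U N) :=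
  (permMap N σ).restrict fun _ hx => permMap_mem σ hx

/-- The induced (diagonal) action on the exterior algebra of `U_N`; it preserves each
exterior power `⋀[ℚ]^k U_N`. -/
def act (N : ℕ) (σ : Equiv.Perm (Fin N)) :
    ExteriorAlgebra ℚ ↥(U N) →ₗ[ℚ] ExteriorAlgebra ℚ ↥(U N) :=
  (ExteriorAlgebra.map (permU N σ)).toLinearMap

/-- The eigenspace of a linear endomorphism for the eigenvalue `c`. -/
def eigen {V : Type*} [AddCommGroup V] [Module ℚ V] (f : V →ₗ[ℚ] V) (c : ℚ) :
    Submodule ℚ V := LinearMap.ker (f - c • LinearMap.id)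

/-- `g` belongs to the hyperoctahedral subgroup of `S_N` on the `q` pairs
`{a+2i, a+2i+1}` (`0 ≤ i < q`), inducing the permutation `τ` on the set of pairs:
`g` fixes every letter outside the pairs, and sends the `i`-th pair to the `τ(i)`-th pair. -/
def IsHypAt (a : ℕ) {N q : ℕ} (g : Equiv.Perm (Fin N)) (τ : Equiv.Perm (Fin q)) : Prop :=
  (∀ i : Fin N, ((i : ℕ) < a ∨ a + 2*q ≤ (i : ℕ)) → g i = i) ∧
  ∀ i : Fin N, ∀ _h1 : a ≤ (i : ℕ), ∀ _h2 : (i : ℕ) < a + 2*q,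
    ((g i : ℕ) - a)/2 = ((τ ⟨((i : ℕ) - a)/2, by omega⟩ : Fin q) : ℕ)

end
noncomputable section

set_option synthInstance.maxHeartbeats 1000000
set_option maxHeartbeats 1000000

/-- `y = (∑_{σ ∈ S_{1,…,t}} σ) · (∑_{τ ∈ S_{t+1,…,t+2j}} sgn(τ) τ)` in the group algebra
`ℚ[S_{t+2j}]`, where `S_A` is the subgroup of permutations fixing every letter outside `A`. -/
def yElt (t j : ℕ) : MonoidAlgebra ℚ (Equiv.Perm (Fin (t + 2*j))) :=
  (∑ σ ∈ Finset.univ.filter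
      (fun σ : Equiv.Perm (Fin (t + 2*j)) => ∀ i : Fin (t + 2*j), t ≤ (i : ℕ) → σ i = i),
    MonoidAlgebra.of ℚ _ σ) *
  (∑ τ ∈ Finset.univ.filter
      (fun τ : Equiv.Perm (Fin (t + 2*j)) => ∀ i : Fin (t + 2*j), (i : ℕ) < t → τ i = i),
    ((Equiv.Perm.sign τ : ℤ) : ℚ) • MonoidAlgebra.of ℚ _ τ)

/-- `z = (1 + (1 t+1) + (2 t+1) + ⋯ + (t t+1)) · y` in `ℚ[S_{t+2j}]`. -/
def zElt (t j : ℕ) (hj : 1 ≤ j) : MonoidAlgebra ℚ (Equiv.Perm (Fin (t + 2*j))) :=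
  (1 + ∑ i : Fin t, MonoidAlgebra.of ℚ _
      (Equiv.swap (Fin.castLE (by omega) i) (⟨t, by omega⟩ : Fin (t + 2*j)))) * yElt t j

end

noncomputable section

/-- The vector `e_i - e_c` in `U N`. -/
def fvec {N : ℕ} (c i : Fin N) : ↥(U N) :=
  ⟨Pi.single i 1 - Pi.single c 1, by rw [mem_U]; simp⟩

lemma permU_fvec {N : ℕ} (σ : Equiv.Perm (Fin N)) (c i : Fin N) :
    permU N σ (fvec c i) = fvec (σ c) (σ i) := by
  apply Subtype.ext
  funext k
  have h : ∀ x : Fin N, (Equiv.symm σ) k = x ↔ k = σ x := fun x => Equiv.symm_apply_eq σ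
  simp [permU, permMap, fvec, LinearMap.funLeft_apply, Pi.single_apply, h]

lemma fvec_self {N : ℕ} (c : Fin N) : fvec c c = 0 := by
  apply Subtype.ext
  simp [fvec]

lemma span_fvec {N : ℕ} (c : Fin N) : Submodule.span ℚ (Set.range (fvec c)) = ⊤ := by
  rw [eq_top_iff]
  intro x _
  have hx := (mem_U x.1).1 x.2
  have : x = ∑ i, x.1 i • fvec c i := by
    apply Subtype.ext
    rw [Submodule.coe_sum]
    funext k
    simp only [fvec, Submodule.coe_smul, Finset.sum_apply, Pi.smul_apply, Pi.sub_apply,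
      smul_eq_mul, mul_sub, Finset.sum_sub_distrib, ← Finset.sum_mul, hx]
    simp [Pi.single_apply]
  rw [this]
  exact Submodule.sum_mem _ fun i _ => Submodule.smul_mem _ _ (Submodule.subset_span ⟨i, rfl⟩)

lemma finrank_U {N : ℕ} (hN : 1 ≤ N) : Module.finrank ℚ ↥(U N) = N - 1 := by
  have h := LinearMap.finrank_range_add_finrank_ker (sumMap N)
  have hs : LinearMap.range (sumMap N) = ⊤ := by
    rw [LinearMap.range_eq_top]
    intro q
    refine ⟨Pi.single ⟨0, hN⟩ q, ?_⟩
    simp [sumMap]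
  rw [hs] at h
  simp at h
  change _ = N - 1
  unfold U
  omega

lemma act_mul {N : ℕ} (σ τ : Equiv.Perm (Fin N)) (w : ExteriorAlgebra ℚ ↥(U N)) :
    act N (σ * τ) w = act N σ (act N τ w) := by
  have h : permU N (σ * τ) = permU N σ ∘ₗ permU N τ := by
    ext x k
    simp [permU, permMap, LinearMap.funLeft_apply]
  simp only [act, h, ← ExteriorAlgebra.map_comp_map]
  rfl

lemma act_ιMulti {N k : ℕ} (σ : Equiv.Perm (Fin N)) (c : Fin N) (a : Fin k → Fin N) :
    act N σ (ExteriorAlgebra.ιMulti ℚ k (fun p => fvec c (a p))) =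
      ExteriorAlgebra.ιMulti ℚ k (fun p => fvec (σ c) (σ (a p))) := by
  simp only [act, AlgHom.toLinearMap_apply, ExteriorAlgebra.map_apply_ιMulti]
  congr 1
  funext p
  simp [permU_fvec]

/-- Permutations of the first `t+1` letters. -/
def symS (t N : ℕ) : Finset (Equiv.Perm (Fin N)) :=
  Finset.univ.filter (fun σ => ∀ i : Fin N, t < (i : ℕ) → σ i = i)

lemma exists_pair (t j : ℕ) (hj : 1 ≤ j) (a : Fin (2*j) → Fin (t + 2*j))
    (ha : Function.Injective a) (hc : ∀ p, (a p : ℕ) < t + 2*j - 1) :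
    ∃ p q, p ≠ q ∧ (a p : ℕ) ≤ t ∧ (a q : ℕ) ≤ t := by
  by_contra hcon
  push Not at hcon
  have h1 : (Finset.univ.filter (fun p => (a p : ℕ) ≤ t)).card ≤ 1 := by
    rw [Finset.card_le_one]
    intro p hp q hq
    simp at hp hq
    by_contra hpq
    have := hcon p q hpq hp
    omega
  have h2 : (Finset.univ.filter (fun p => ¬ (a p : ℕ) ≤ t)).card ≤
      (Finset.Ioo t (t + 2*j - 1)).card := by
    apply Finset.card_le_card_of_injOn (fun p => (a p : ℕ))
    · intro p hp
      have := hc p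
      simp at hp ⊢
      omega
    · intro p _ q _ h
      exact ha (Fin.ext h)
  have h3 := Finset.card_filter_add_card_filter_not (s := (Finset.univ : Finset (Fin (2*j))))
    (fun p => (a p : ℕ) ≤ t)
  simp at h1 h2 h3
  omega

lemma sum_act_ιMulti (t j : ℕ) (hj : 1 ≤ j) (a : Fin (2*j) → Fin (t + 2*j))
    (c : Fin (t + 2*j)) (hcv : (c : ℕ) = t + 2*j - 1) :
    ∑ σ ∈ symS t (t + 2*j), act (t + 2*j) σ
      (ExteriorAlgebra.ιMulti ℚ (2*j) (fun p => fvec c (a p))) = 0 := by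
  by_cases hc : ∃ p, a p = c
  · obtain ⟨p, hp⟩ := hc
    have : ExteriorAlgebra.ιMulti ℚ (2*j) (fun p => fvec c (a p)) = 0 :=
      AlternatingMap.map_coord_zero _ p (by rw [hp, fvec_self])
    simp [this]
  push Not at hc
  by_cases hi : Function.Injective a
  swap
  · have : ExteriorAlgebra.ιMulti ℚ (2*j) (fun p => fvec c (a p)) = 0 := by
      apply ExteriorAlgebra.ιMulti_eq_zero_of_not_inj
      intro h
      exact hi (fun x y hxy => h (by simp [hxy]))
    simp [this]
  obtain ⟨p, q, hpq, hp, hq⟩ := exists_pair t j hj a hi (fun p => by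
    have h1 := hc p
    have h2 := (a p).2
    rw [Ne, Fin.ext_iff] at h1
    omega)
  set w := ExteriorAlgebra.ιMulti ℚ (2*j) (fun p => fvec c (a p)) with hw
  have hs : act (t + 2*j) (Equiv.swap (a p) (a q)) w = - w := by
    rw [hw, act_ιMulti, ← AlternatingMap.map_swap _ _ hpq]
    congr 1
    funext r
    rw [Equiv.swap_apply_of_ne_of_ne (Ne.symm (hc p)) (Ne.symm (hc q))]
    simp only [Function.comp]
    rw [hi.swap_apply]
  have hre : ∑ σ ∈ symS t (t + 2*j), act (t + 2*j) σ w =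
      ∑ σ ∈ symS t (t + 2*j), act (t + 2*j) (σ * Equiv.swap (a p) (a q)) w := by
    symm
    apply Finset.sum_equiv (Equiv.mulRight (Equiv.swap (a p) (a q)))
    · intro σ
      have key : ∀ i : Fin (t + 2*j), t < (i : ℕ) → Equiv.swap (a p) (a q) i = i := by
        intro i hi
        apply Equiv.swap_apply_of_ne_of_ne <;> (rw [Ne, Fin.ext_iff]; omega)
      simp only [symS, Finset.mem_filter, Finset.mem_univ, true_and, Equiv.coe_mulRight,
        Equiv.Perm.mul_apply]
      exact forall_congr' fun i => imp_congr_right fun h => by rw [key i h]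
    · intros
      rfl
  simp only [act_mul, hs, map_neg, Finset.sum_neg_distrib] at hre
  rw [eq_neg_iff_add_eq_zero, ← two_smul ℚ, smul_eq_zero] at hre
  exact hre.resolve_left (by norm_num)

lemma sum_act_eq_zero (t j : ℕ) (hj : 1 ≤ j) (w : ExteriorAlgebra ℚ ↥(U (t + 2*j)))
    (hw : w ∈ ⋀[ℚ]^(2*j) ↥(U (t + 2*j))) :
    ∑ σ ∈ symS t (t + 2*j), act (t + 2*j) σ w = 0 := by
  let c : Fin (t + 2*j) := ⟨t + 2*j - 1, by omega⟩
  rw [← exteriorPower.ιMulti_span_fixedDegree_of_span_eq_top ℚ (2*j) _ (span_fvec c)] at hw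
  have hle : Submodule.span ℚ (ExteriorAlgebra.ιMulti ℚ (2*j) ''
      {a | Set.range a ⊆ Set.range (fvec c)}) ≤
      LinearMap.ker (∑ σ ∈ symS t (t + 2*j), act (t + 2*j) σ) := by
    rw [Submodule.span_le]
    rintro _ ⟨f, hf, rfl⟩
    obtain ⟨a, rfl⟩ := Set.range_subset_range_iff_exists_comp.mp hf
    have := sum_act_ιMulti t j hj a c rfl
    simpa [LinearMap.sum_apply] using! this
  simpa [LinearMap.sum_apply] using hle hw

lemma sum_act_invariant (t j : ℕ) (hj : 1 ≤ j) (w : ExteriorAlgebra ℚ ↥(U (t + 2*j)))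
    (hw : w ∈ ⋀[ℚ]^(2*j) ↥(U (t + 2*j)))
    (hinv : ∀ σ ∈ symS t (t + 2*j), act (t + 2*j) σ w = w) : w = 0 := by
  have h := sum_act_eq_zero t j hj w hw
  rw [Finset.sum_congr rfl hinv, Finset.sum_const, ← Nat.cast_smul_eq_nsmul ℚ, smul_eq_zero] at h
  rcases h with h | h
  · rw [Nat.cast_eq_zero, Finset.card_eq_zero] at h
    have : (1 : Equiv.Perm (Fin (t + 2*j))) ∈ symS t (t + 2*j) := by simp [symS]
    simp [h] at this
  · exact h

/-! ### The group algebra side -/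

lemma mul_cong_l {R : Type*} [Mul R] {a b : R} (h : a = b) (c : R) : a * c = b * c := by rw [h]

lemma mul_cong_r {R : Type*} [Mul R] {a b : R} (h : a = b) (c : R) : c * a = c * b := by rw [h]

lemma y_symm (t j : ℕ) (σ : Equiv.Perm (Fin (t + 2*j)))
    (hσ : ∀ i : Fin (t + 2*j), t ≤ (i : ℕ) → σ i = i) :
    MonoidAlgebra.of ℚ _ σ * yElt t j = yElt t j := by
  unfold yElt
  rw [← mul_assoc]
  apply mul_cong_l
  rw [Finset.mul_sum]
  apply Finset.sum_equiv (Equiv.mulLeft σ)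
  · intro σ'
    simp only [Finset.mem_filter, Finset.mem_univ, true_and, Equiv.coe_mulLeft,
      Equiv.Perm.mul_apply]
    refine forall_congr' fun i => imp_congr_right fun h => ?_
    constructor
    · intro h'
      rw [h', hσ i h]
    · intro h'
      exact σ.injective (h'.trans (hσ i h).symm)
  · intro σ' _
    rw [← map_mul]
    rfl

lemma y_alt (t j : ℕ) (τ : Equiv.Perm (Fin (t + 2*j)))
    (hτ : ∀ i : Fin (t + 2*j), (i : ℕ) < t → τ i = i) :
    MonoidAlgebra.of ℚ _ τ * yElt t j = ((Equiv.Perm.sign τ : ℤ) : ℚ) • yElt t j := by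
  unfold yElt
  have hcomm : ∀ B : MonoidAlgebra ℚ (Equiv.Perm (Fin (t + 2*j))), MonoidAlgebra.of ℚ _ τ * ((∑ σ ∈ Finset.univ.filter
      (fun σ : Equiv.Perm (Fin (t + 2*j)) => ∀ i : Fin (t + 2*j), t ≤ (i : ℕ) → σ i = i),
    MonoidAlgebra.of ℚ _ σ) * B) = (∑ σ ∈ Finset.univ.filter
      (fun σ : Equiv.Perm (Fin (t + 2*j)) => ∀ i : Fin (t + 2*j), t ≤ (i : ℕ) → σ i = i),
    MonoidAlgebra.of ℚ _ σ) * (MonoidAlgebra.of ℚ _ τ * B) := by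
    intro B
    rw [← mul_assoc, ← mul_assoc]
    apply mul_cong_l
    rw [Finset.mul_sum, Finset.sum_mul]
    apply Finset.sum_congr rfl
    intro σ hσ
    simp only [Finset.mem_filter, Finset.mem_univ, true_and] at hσ
    rw [← map_mul, ← map_mul]
    apply congrArg
    apply Equiv.Perm.Disjoint.commute
    intro x
    rcases lt_or_ge (x : ℕ) t with h | h
    · exact Or.inl (hτ x h)
    · exact Or.inr (hσ x h)
  rw [hcomm, ← mul_smul_comm]
  apply mul_cong_r
  rw [Finset.mul_sum, Finset.smul_sum]
  apply Finset.sum_equiv (Equiv.mulLeft τ)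
  · intro σ'
    simp only [Finset.mem_filter, Finset.mem_univ, true_and, Equiv.coe_mulLeft,
      Equiv.Perm.mul_apply]
    refine forall_congr' fun i => imp_congr_right fun h => ?_
    constructor
    · intro h'
      rw [h', hτ i h]
    · intro h'
      exact τ.injective (h'.trans (hτ i h).symm)
  · intro σ' _
    rw [Equiv.coe_mulLeft, map_mul, map_mul, mul_smul_comm, smul_smul]
    congr 1
    rcases Int.units_eq_one_or (Equiv.Perm.sign τ) with h | h <;> simp [h]

lemma y_stab (t j : ℕ) (h : Equiv.Perm (Fin (t + 2*j)))
    (hh : ∀ i : Fin (t + 2*j), t ≤ (h i : ℕ) ↔ t ≤ (i : ℕ)) :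
    ∃ ε : ℚ, MonoidAlgebra.of ℚ _ h * yElt t j = ε • yElt t j := by
  let τ : Equiv.Perm (Fin (t + 2*j)) :=
    Equiv.Perm.ofSubtype (h.subtypePerm (p := fun i : Fin (t + 2*j) => t ≤ (i : ℕ)) hh)
  have hτ1 : ∀ i : Fin (t + 2*j), (i : ℕ) < t → τ i = i := fun i hi =>
    Equiv.Perm.ofSubtype_apply_of_not_mem _ (by simpa using hi)
  have hτ2 : ∀ i : Fin (t + 2*j), t ≤ (i : ℕ) → τ i = h i := fun i hi => by
    have := Equiv.Perm.ofSubtype_apply_of_mem (h.subtypePerm (p := fun i : Fin (t + 2*j) => t ≤ (i : ℕ)) hh) hi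
    simpa using! this
  have hσ : ∀ i : Fin (t + 2*j), t ≤ (i : ℕ) → (h * τ⁻¹) i = i := by
    intro i hi
    have h1 : t ≤ ((τ⁻¹ i : Fin _) : ℕ) := by
      by_contra hlt
      have h2 := hτ1 (τ⁻¹ i) (by omega)
      have h3 : τ (τ⁻¹ i) = i := by simp
      rw [h3] at h2
      rw [← h2] at hlt
      omega
    rw [Equiv.Perm.mul_apply, ← hτ2 _ h1]
    simp
  refine ⟨((Equiv.Perm.sign τ : ℤ) : ℚ), ?_⟩
  have e : h = (h * τ⁻¹) * τ := by simp
  rw [e, map_mul, mul_assoc, y_alt t j τ hτ1, mul_smul_comm, y_symm t j _ hσ]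

/-- `σ y` for `σ` in the group on the first `t+1` letters depends only on `σ t`. -/
lemma y_coset (t j : ℕ) (b : Fin (t + 2*j)) (hb : (b : ℕ) = t)
    (σ : Equiv.Perm (Fin (t + 2*j)))
    (hσ : ∀ i : Fin (t + 2*j), t < (i : ℕ) → σ i = i) :
    MonoidAlgebra.of ℚ _ σ * yElt t j = MonoidAlgebra.of ℚ _ (Equiv.swap (σ b) b) * yElt t j := by
  have hσb : (σ b : ℕ) ≤ t := by
    by_contra hlt
    have h2 := hσ (σ b) (by omega)
    have := σ.injective h2
    rw [this] at hlt
    omega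
  have e : σ = Equiv.swap (σ b) b * (Equiv.swap (σ b) b * σ) := by
    rw [← mul_assoc, Equiv.swap_mul_self, one_mul]
  conv_lhs => rw [e, map_mul, mul_assoc]
  rw [y_symm t j (Equiv.swap (σ b) b * σ)]
  intro i hi
  rw [Equiv.Perm.mul_apply]
  rcases eq_or_lt_of_le hi with h | h
  · have : i = b := Fin.ext (by omega)
    rw [this, Equiv.swap_apply_left]
  · rw [hσ i h]
    apply Equiv.swap_apply_of_ne_of_ne <;> (rw [Ne, Fin.ext_iff]; omega)

lemma z_eq (t j : ℕ) (hj : 1 ≤ j) (b : Fin (t + 2*j)) (hb : (b : ℕ) = t) :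
    zElt t j hj = ∑ i ∈ Finset.univ.filter (fun i : Fin (t + 2*j) => (i : ℕ) ≤ t),
      MonoidAlgebra.of ℚ _ (Equiv.swap i b) * yElt t j := by
  have hb' : b = ⟨t, by omega⟩ := Fin.ext hb
  unfold zElt
  rw [← hb', ← Finset.sum_mul]
  apply mul_cong_l
  have h1 : Finset.univ.filter (fun i : Fin (t + 2*j) => (i : ℕ) ≤ t) =
      insert b (Finset.univ.map (Fin.castLEEmb (show t ≤ t + 2*j by omega))) := by
    ext i
    simp only [Finset.mem_filter, Finset.mem_univ, true_and, Finset.mem_insert, Finset.mem_map,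
      Fin.castLEEmb_apply]
    constructor
    · intro h
      rcases eq_or_lt_of_le h with h | h
      · left
        exact Fin.ext (by omega)
      · right
        exact ⟨⟨i, h⟩, Fin.ext rfl⟩
    · rintro (rfl | ⟨a, rfl⟩)
      · omega
      · simpa using a.2.le
  rw [h1, Finset.sum_insert, Finset.sum_map]
  · simp only [Equiv.swap_self, Fin.castLEEmb_apply]
    congr 1
  · simp only [Finset.mem_map, Finset.mem_univ, true_and, Fin.castLEEmb_apply, not_exists]
    intro a h
    have := congrArg Fin.val h
    have h2 := a.2
    simp at this
    omega

lemma z_inv (t j : ℕ) (hj : 1 ≤ j) (σ : Equiv.Perm (Fin (t + 2*j)))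
    (hσ : σ ∈ symS t (t + 2*j)) :
    MonoidAlgebra.of ℚ _ σ * zElt t j hj = zElt t j hj := by
  let b : Fin (t + 2*j) := ⟨t, by omega⟩
  simp only [symS, Finset.mem_filter, Finset.mem_univ, true_and] at hσ
  rw [z_eq t j hj b rfl, Finset.mul_sum]
  apply Finset.sum_equiv σ
  · intro i
    simp only [Finset.mem_filter, Finset.mem_univ, true_and]
    constructor
    · intro hi
      by_contra hlt
      have h2 := σ.injective (hσ (σ i) (by omega))
      rw [h2] at hlt
      exact hlt hi
    · intro hi
      by_contra hlt
      rw [hσ i (by omega)] at hi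
      exact hlt hi
  · intro i hi
    simp only [Finset.mem_filter, Finset.mem_univ, true_and] at hi
    rw [← mul_assoc, ← map_mul, y_coset t j b rfl]
    · rw [Equiv.Perm.mul_apply, Equiv.swap_apply_right]
    · intro k hk
      rw [Equiv.Perm.mul_apply, Equiv.swap_apply_of_ne_of_ne, hσ k hk]
      · rw [Ne, Fin.ext_iff]; omega
      · rw [Ne, Fin.ext_iff]; change ¬ (k : ℕ) = t; omega

/-- The last `2j` letters. -/
def topSet (t j : ℕ) : Finset (Fin (t + 2*j)) :=
  Finset.univ.filter (fun i => t ≤ (i : ℕ))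

lemma mem_topSet {t j : ℕ} (i : Fin (t + 2*j)) : i ∈ topSet t j ↔ t ≤ (i : ℕ) := by
  simp [topSet]

lemma card_topSet (t j : ℕ) : (topSet t j).card = 2*j := by
  have h := Fin.card_filter_val_lt (n := t + 2*j) (m := t)
  have h2 := Finset.card_filter_add_card_filter_not
    (s := (Finset.univ : Finset (Fin (t + 2*j)))) (fun i => (i : ℕ) < t)
  simp only [not_lt] at h2
  rw [h, Finset.card_univ, Fintype.card_fin] at h2
  unfold topSet
  omega

open Classical in
/-- Chosen element `± g y` with `g` carrying `topSet` to `S`. -/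
def sElt (t j : ℕ) (S : Finset (Fin (t + 2*j))) :
    MonoidAlgebra ℚ (Equiv.Perm (Fin (t + 2*j))) :=
  if h : ∃ g : Equiv.Perm (Fin (t + 2*j)), (topSet t j).image g = S then
    MonoidAlgebra.of ℚ _ h.choose * yElt t j else 0

lemma sElt_mem (t j : ℕ) (S : Finset (Fin (t + 2*j))) :
    sElt t j S ∈ Ideal.span {yElt t j} := by
  unfold sElt
  split_ifs
  · exact Ideal.mul_mem_left _ _ (Ideal.subset_span rfl)
  · exact Submodule.zero_mem _

lemma of_mul_y_eq (t j : ℕ) (g : Equiv.Perm (Fin (t + 2*j))) :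
    ∃ ε : ℚ, MonoidAlgebra.of ℚ _ g * yElt t j = ε • sElt t j ((topSet t j).image g) := by
  have h : ∃ g' : Equiv.Perm (Fin (t + 2*j)),
      (topSet t j).image g' = (topSet t j).image g := ⟨g, rfl⟩
  have hs : sElt t j ((topSet t j).image g) = MonoidAlgebra.of ℚ _ h.choose * yElt t j := by
    unfold sElt
    rw [dif_pos h]
  have hg := h.choose_spec
  generalize h.choose = g' at hs hg
  obtain ⟨ε, hε⟩ := y_stab t j (g'⁻¹ * g) (by
    intro i
    rw [← mem_topSet, ← mem_topSet]
    have h1 : g i ∈ (topSet t j).image g' ↔ g i ∈ (topSet t j).image g := by rw [hg]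
    simp only [Finset.mem_image, EmbeddingLike.apply_eq_iff_eq, exists_eq_right] at h1
    rw [← h1]
    constructor
    · intro h
      exact ⟨_, h, by simp⟩
    · rintro ⟨a, ha, hag⟩
      rw [Equiv.Perm.mul_apply, ← hag]
      simpa using ha)
  refine ⟨ε, ?_⟩
  rw [hs, ← mul_smul_comm, ← hε, ← mul_assoc, ← map_mul]
  simp

/-- The index type for the spanning family. -/
abbrev Idx (t j : ℕ) (c : Fin (t + 2*j)) : Type :=
  ↥(Finset.powersetCard (2*j) ((Finset.univ : Finset (Fin (t + 2*j))).erase c))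

lemma of_mul_y_mem_of_not_mem (t j : ℕ) (c : Fin (t + 2*j))
    (g : Equiv.Perm (Fin (t + 2*j))) (hg : c ∉ (topSet t j).image g) :
    MonoidAlgebra.of ℚ _ g * yElt t j ∈
      Submodule.span ℚ (Set.range (fun S : Idx t j c => sElt t j S.1)) := by
  obtain ⟨ε, hε⟩ := of_mul_y_eq t j g
  rw [hε]
  apply Submodule.smul_mem
  apply Submodule.subset_span
  refine ⟨⟨(topSet t j).image g, ?_⟩, rfl⟩
  rw [Finset.mem_powersetCard]
  constructor
  · intro x hx
    simp only [Finset.mem_erase, Finset.mem_univ, and_true]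
    rintro rfl
    exact hg hx
  · rw [Finset.card_image_of_injective _ g.injective, card_topSet]

lemma of_mul_y_mem (t j : ℕ) (hj : 1 ≤ j) (c : Fin (t + 2*j))
    (g : Equiv.Perm (Fin (t + 2*j))) :
    MonoidAlgebra.of ℚ _ g * yElt t j ∈
      Submodule.span ℚ (Set.range (fun S : Idx t j c => sElt t j S.1)) ⊔
        (Ideal.span {zElt t j hj}).restrictScalars ℚ := by
  by_cases hg : c ∈ (topSet t j).image g
  swap
  · exact Submodule.mem_sup_left (of_mul_y_mem_of_not_mem t j c g hg)
  obtain ⟨d, hd, hdc⟩ := Finset.mem_image.1 hg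
  rw [mem_topSet] at hd
  let b : Fin (t + 2*j) := ⟨t, by omega⟩
  obtain ⟨ε, hε⟩ := y_stab t j (Equiv.swap d b) (by
    intro i
    rcases eq_or_ne i d with rfl | h1
    · simp [b, hd]
    rcases eq_or_ne i b with rfl | h2
    · simp [b, hd]
    rw [Equiv.swap_apply_of_ne_of_ne h1 h2])
  have e1 : MonoidAlgebra.of ℚ _ g * yElt t j =
      ε • (MonoidAlgebra.of ℚ _ (g * Equiv.swap d b) * yElt t j) := by
    rw [← mul_smul_comm, ← hε, ← mul_assoc, ← map_mul, mul_assoc, Equiv.swap_mul_self, mul_one]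
  rw [e1]
  apply Submodule.smul_mem
  set g' := g * Equiv.swap d b with hg'
  have hgb : g' b = c := by simp [hg', hdc]
  have hz : MonoidAlgebra.of ℚ _ g' * zElt t j hj = MonoidAlgebra.of ℚ _ g' * yElt t j +
      ∑ i ∈ (Finset.univ.filter (fun i : Fin (t + 2*j) => (i : ℕ) ≤ t)).erase b,
        MonoidAlgebra.of ℚ _ (g' * Equiv.swap i b) * yElt t j := by
    rw [z_eq t j hj b rfl, Finset.mul_sum, ← Finset.add_sum_erase _ _ (a := b) (by simp [b])]
    congr 1
    · simp only [Equiv.swap_self]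
      apply congrArg
      exact one_mul _
    · apply Finset.sum_congr rfl
      intro i _
      rw [← mul_assoc, ← map_mul]
  rw [eq_sub_of_add_eq hz.symm]
  apply Submodule.sub_mem
  · apply Submodule.mem_sup_right
    exact Ideal.mul_mem_left _ _ (Ideal.subset_span rfl)
  · apply Submodule.mem_sup_left
    apply Submodule.sum_mem
    intro i hi
    simp only [Finset.mem_erase, Finset.mem_filter, Finset.mem_univ, true_and] at hi
    apply of_mul_y_mem_of_not_mem
    intro hc
    obtain ⟨k, hk, hkc⟩ := Finset.mem_image.1 hc
    rw [mem_topSet] at hk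
    rw [Equiv.Perm.mul_apply, ← hgb] at hkc
    have h3 := g'.injective hkc
    have h4 : k = i := by
      exact (Equiv.swap i b).injective (h3.trans (Equiv.swap_apply_left i b).symm)
    rw [h4] at hk
    apply hi.1
    exact Fin.ext (le_antisymm hi.2 hk)

lemma mem_of_mem_span_y (t j : ℕ) (hj : 1 ≤ j) (c : Fin (t + 2*j))
    (x : MonoidAlgebra ℚ (Equiv.Perm (Fin (t + 2*j)))) (hx : x ∈ Ideal.span {yElt t j}) :
    x ∈ Submodule.span ℚ (Set.range (fun S : Idx t j c => sElt t j S.1)) ⊔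
        (Ideal.span {zElt t j hj}).restrictScalars ℚ := by
  obtain ⟨a, rfl⟩ := Ideal.mem_span_singleton'.1 hx
  induction a using MonoidAlgebra.induction_on with
  | of g => exact of_mul_y_mem t j hj c g
  | add a b ha hb =>
    rw [add_mul]
    exact Submodule.add_mem _ (ha (Ideal.mul_mem_left _ _ (Ideal.subset_span rfl)))
      (hb (Ideal.mul_mem_left _ _ (Ideal.subset_span rfl)))
  | smul r a ha =>
    rw [smul_mul_assoc]
    exact Submodule.smul_mem _ _ (ha (Ideal.mul_mem_left _ _ (Ideal.subset_span rfl)))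

/-- For `t ≥ 2`, `j ≥ 1`, `G = S_{t+2j}` and
`z = (1 + (1 t+1) + ⋯ + (t t+1))·y ∈ ℚ[G]`: every homomorphism of left `ℚ[G]`-modules
`φ : ℚ[G]·y → Λ^{2j} U_{t+2j}` (i.e. `ℚ`-linear and `G`-equivariant) satisfies `φ(z) = 0`;
moreover if `φ` is surjective then `ker φ = ℚ[G]·z`. -/
theorem stmt7 (t j : ℕ) (ht : 2 ≤ t) (hj : 1 ≤ j)
    (φ : ↥(Ideal.span {yElt t j}) →ₗ[ℚ] ↥(⋀[ℚ]^(2*j) ↥(U (t + 2*j))))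
    (hφ : ∀ (g : Equiv.Perm (Fin (t + 2*j))) (x : MonoidAlgebra ℚ (Equiv.Perm (Fin (t + 2*j))))
        (hx : x ∈ Ideal.span {yElt t j}),
        ((φ ⟨MonoidAlgebra.of ℚ _ g * x, Ideal.mul_mem_left _ _ hx⟩ :
            ↥(⋀[ℚ]^(2*j) ↥(U (t + 2*j)))) : ExteriorAlgebra ℚ ↥(U (t + 2*j)))
          = act (t + 2*j) g ((φ ⟨x, hx⟩ : ↥(⋀[ℚ]^(2*j) ↥(U (t + 2*j)))) :
              ExteriorAlgebra ℚ ↥(U (t + 2*j)))) :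
    φ ⟨zElt t j hj, by
        unfold zElt; exact Ideal.mul_mem_left _ _ (Ideal.subset_span rfl)⟩ = 0 ∧
    (Function.Surjective φ →
      ∀ (x : MonoidAlgebra ℚ (Equiv.Perm (Fin (t + 2*j)))) (hx : x ∈ Ideal.span {yElt t j}),
        (φ ⟨x, hx⟩ = 0 ↔ x ∈ Ideal.span {zElt t j hj})) := by
  have hzy : zElt t j hj ∈ Ideal.span {yElt t j} := by
    unfold zElt; exact Ideal.mul_mem_left _ _ (Ideal.subset_span rfl)
  have hz0 : φ ⟨zElt t j hj, hzy⟩ = 0 := by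
    apply Subtype.ext
    apply sum_act_invariant t j hj _ (Subtype.property _)
    intro σ hσ
    rw [← hφ σ _ hzy]
    congr 3
    exact z_inv t j hj σ hσ
  have hzspan : ∀ x, x ∈ Ideal.span {zElt t j hj} → ∀ hx : x ∈ Ideal.span {yElt t j},
      φ ⟨x, hx⟩ = 0 := by
    intro x hxz
    obtain ⟨a, rfl⟩ := Ideal.mem_span_singleton'.1 hxz
    clear hxz
    induction a using MonoidAlgebra.induction_on with
    | of g =>
      intro hx
      apply Subtype.ext
      rw [hφ g _ hzy, hz0]
      simp
    | add a b ha hb =>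
      intro hx
      have e : (⟨(a + b) * zElt t j hj, hx⟩ : ↥(Ideal.span {yElt t j})) =
          ⟨a * zElt t j hj, Ideal.mul_mem_left _ _ hzy⟩ +
          ⟨b * zElt t j hj, Ideal.mul_mem_left _ _ hzy⟩ := Subtype.ext (add_mul _ _ _)
      rw [e, map_add, ha, hb, add_zero]
    | smul r a ha =>
      intro hx
      have e : (⟨(r • a) * zElt t j hj, hx⟩ : ↥(Ideal.span {yElt t j})) =
          r • ⟨a * zElt t j hj, Ideal.mul_mem_left _ _ hzy⟩ := Subtype.ext (smul_mul_assoc _ _ _)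
      rw [e, map_smul, ha, smul_zero]
  refine ⟨hz0, fun hsurj x hx => ⟨fun h0 => ?_, fun hxz => hzspan x hxz hx⟩⟩
  let c : Fin (t + 2*j) := ⟨t, by omega⟩
  let s : Idx t j c → ↥(Ideal.span {yElt t j}) := fun S => ⟨sElt t j S.1, sElt_mem t j S.1⟩
  have hdec : ∀ (x : MonoidAlgebra ℚ (Equiv.Perm (Fin (t + 2*j))))
      (hx : x ∈ Ideal.span {yElt t j}), ∃ (a : Idx t j c → ℚ) (z' : _),
      z' ∈ Ideal.span {zElt t j hj} ∧ x = ∑ S, a S • sElt t j S.1 + z' ∧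
      φ ⟨x, hx⟩ = ∑ S, a S • φ (s S) := by
    intro x hx
    obtain ⟨u, hu, z', hz', hux⟩ := Submodule.mem_sup.1 (mem_of_mem_span_y t j hj c x hx)
    obtain ⟨a, ha⟩ := (Submodule.mem_span_range_iff_exists_fun ℚ).1 hu
    have hz'' : z' ∈ Ideal.span {zElt t j hj} := hz'
    have hz'y : z' ∈ Ideal.span {yElt t j} :=
      (Ideal.span_le.2 (Set.singleton_subset_iff.2 hzy)) hz''
    refine ⟨a, z', hz'', by rw [ha, hux], ?_⟩
    have e : (⟨x, hx⟩ : ↥(Ideal.span {yElt t j})) = ∑ S, a S • s S + ⟨z', hz'y⟩ := by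
      apply Subtype.ext
      rw [Submodule.coe_add, Submodule.coe_sum]
      exact hux.symm.trans (by rw [← ha]; rfl)
    rw [e, map_add, hzspan z' hz'' hz'y, add_zero, map_sum]
    simp only [map_smul]
  have hli : LinearIndependent ℚ (fun S => φ (s S)) := by
    apply linearIndependent_of_top_le_span_of_card_eq_finrank
    · intro w _
      obtain ⟨⟨x, hx⟩, rfl⟩ := hsurj w
      obtain ⟨a, z', _, _, h⟩ := hdec x hx
      rw [h]
      exact Submodule.sum_mem _ fun S _ => Submodule.smul_mem _ _ (Submodule.subset_span ⟨S, rfl⟩)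
    · rw [exteriorPower.finrank_eq, finrank_U (by omega), Fintype.card_coe,
        Finset.card_powersetCard, Finset.card_erase_of_mem (Finset.mem_univ _), Finset.card_univ,
        Fintype.card_fin]
  obtain ⟨a, z', hz', hxa, h⟩ := hdec x hx
  rw [h0] at h
  have ha := Fintype.linearIndependent_iff.1 hli a h.symm
  rw [hxa]
  simpa [ha] using hz'

end
end

section
/- Let j ≥ 2. In W = Λ^{2j} ℚ^{4j−1} with the permutation action of S_{4j−1} and the submodule K generated by ρ, for every 1 ≤ i ≤ 2j−2 the vector (−1)^{i−1} e_1 ∧ e_2 ∧ e_3 ∧ S_i − e_1 ∧ e_2 ∧ e_3 ∧ S_1 lies in K. -/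
set_option synthInstance.maxHeartbeats 1000000
set_option maxHeartbeats 1000000

noncomputable section

open ExteriorAlgebra

/-- The standard basis vector `e_{m+1}` of `ℚ^{4j−1}` (with `0`-based index `m`). -/
def ε (j : ℕ) (m : Fin (4*j-1)) : Fin (4*j-1) → ℚ := Pi.single m 1

/-- The action of `S_N` on the exterior algebra of `ℚ^N` induced by permuting the standard
basis vectors (`g` sends `e_m` to `e_{g m}`). -/
def pact (N : ℕ) (g : Equiv.Perm (Fin N)) :
    ExteriorAlgebra ℚ (Fin N → ℚ) →ₗ[ℚ] ExteriorAlgebra ℚ (Fin N → ℚ) :=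
  (ExteriorAlgebra.map (LinearMap.funLeft ℚ ℚ ⇑g⁻¹)).toLinearMap

/-- The element of the `i`-th loop `B_i = {2i+2, 2i+3}` (1-indexed; here `i` is `0`-based)
selected by the Boolean `b`. -/
def idx (j : ℕ) (k : Fin (2*j-2)) (b : Bool) : Fin (4*j-1) :=
  ⟨2*(k : ℕ) + 3 + b.toNat, by have := Bool.toNat_lt b; omega⟩

/-- `S_I`: the sum, over all choices of one element `s_i ∈ B_i` for each loop `i ∉ I`, of the
wedge products `e_{s_{i_1}} ∧ ⋯ ∧ e_{s_{i_m}}` taken in increasing order of the loop indices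
`i ∉ I`. -/
def SI (j : ℕ) (I : Finset (Fin (2*j-2))) : ExteriorAlgebra ℚ (Fin (4*j-1) → ℚ) :=
  ∑ c ∈ Finset.univ.filter (fun c : Fin (2*j-2) → Bool => ∀ i ∈ I, c i = false),
    (List.ofFn fun k : Fin (2*j-2) =>
      if k ∈ I then 1 else ExteriorAlgebra.ι ℚ (ε j (idx j k (c k)))).prod

/-- The wedge `e_{2j} ∧ e_{2j+1} ∧ ⋯ ∧ e_{4j−1}`. -/
def ρbase (j : ℕ) : ExteriorAlgebra ℚ (Fin (4*j-1) → ℚ) :=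
  (List.ofFn fun k : Fin (2*j) =>
    ExteriorAlgebra.ι ℚ (ε j ⟨2*j - 1 + (k : ℕ), by omega⟩)).prod

/-- `ρ = (1 + ∑_{i=1}^{2j−1} (i 2j)) · (e_{2j} ∧ e_{2j+1} ∧ ⋯ ∧ e_{4j−1})`. -/
def ρElt (j : ℕ) : ExteriorAlgebra ℚ (Fin (4*j-1) → ℚ) :=
  ρbase j + ∑ m : Fin (2*j-1),
    pact (4*j-1) (Equiv.swap (⟨(m : ℕ), by omega⟩ : Fin (4*j-1)) ⟨2*j - 1, by have := m.isLt; omega⟩) (ρbase j)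

/-- `K`: the `ℚ[S_{4j−1}]`-submodule of `W = Λ^{2j} ℚ^{4j−1}` generated by `ρ`, i.e. the span
of the `S_{4j−1}`-orbit of `ρ`. -/
def Ksub (j : ℕ) : Submodule ℚ (ExteriorAlgebra ℚ (Fin (4*j-1) → ℚ)) :=
  Submodule.span ℚ (Set.range fun g : Equiv.Perm (Fin (4*j-1)) => pact (4*j-1) g (ρElt j))

end

noncomputable section

/-- `e_{m+1}` as an element of the exterior algebra. -/
def E (j : ℕ) (m : Fin (4*j-1)) : ExteriorAlgebra ℚ (Fin (4*j-1) → ℚ) :=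
  ExteriorAlgebra.ι ℚ (ε j m)

end

section helpers

open ExteriorAlgebra

lemma ofFn_mul_shift {A : Type*} [Ring A] [Algebra ℚ A] (a : A) :
    ∀ (n : ℕ) (x y : Fin n → A) (s : Fin n → ℚ) (i : Fin n),
      (∀ k, k < i → a * x k = s k • (x k * a)) → y i = a * x i → (∀ k, k ≠ i → y k = x k) →
      a * (List.ofFn x).prod = (∏ k ∈ Finset.univ.filter (fun k => k < i), s k) • (List.ofFn y).prod := by
  intro n
  induction n with
  | zero => intro x y s i; exact i.elim0
  | succ n ih =>
    intro x y s i h hi hy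
    rw [List.ofFn_succ, List.ofFn_succ, List.prod_cons, List.prod_cons, ← mul_assoc]
    rcases Fin.eq_zero_or_eq_succ i with rfl | ⟨i, rfl⟩
    · rw [hi]
      have : (fun k : Fin n => y k.succ) = fun k => x k.succ := by
        funext k; exact hy _ (Fin.succ_ne_zero k)
      rw [this]; simp
    · rw [h 0 (Fin.succ_pos i), hy 0 (Fin.succ_ne_zero i).symm, smul_mul_assoc, mul_assoc,
        ih (fun k => x k.succ) (fun k => y k.succ) (fun k => s k.succ) i
          (fun k hk => h _ (Fin.succ_lt_succ_iff.2 hk)) hi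
          (fun k hk => hy _ (fun e => hk (Fin.succ_injective _ e))), mul_smul_comm, smul_smul]
      congr 1
      rw [Finset.prod_filter, Finset.prod_filter, Fin.prod_univ_succ]
      simp [Fin.succ_lt_succ_iff]

/-- the loop vector -/
noncomputable def bv (j : ℕ) (k : Fin (2*j-2)) : Fin (4*j-1) → ℚ :=
  ε j (idx j k false) + ε j (idx j k true)

noncomputable def PI (j : ℕ) (I : Finset (Fin (2*j-2))) (k : Fin (2*j-2)) :
    ExteriorAlgebra ℚ (Fin (4*j-1) → ℚ) := if k ∈ I then 1 else ι ℚ (bv j k)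

lemma SI_eq (j : ℕ) (I : Finset (Fin (2*j-2))) : SI j I = (List.ofFn (PI j I)).prod := by
  classical
  have h := (MultilinearMap.mkPiAlgebraFin ℚ (2*j-2)
    (ExteriorAlgebra ℚ (Fin (4*j-1) → ℚ))).map_sum_finset
      (fun k b => if k ∈ I then 1 else ι ℚ (ε j (idx j k b)))
      (fun k => if k ∈ I then {false} else Finset.univ)
  simp only [MultilinearMap.mkPiAlgebraFin_apply] at h
  have h2 : (fun k => ∑ b ∈ (if k ∈ I then {false} else Finset.univ : Finset Bool),
      (if k ∈ I then 1 else ι ℚ (ε j (idx j k b)))) = PI j I := by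
    funext k
    unfold PI bv
    split_ifs with hk
    · simp
    · simp [add_comm]
  rw [h2] at h
  rw [h]
  unfold SI
  refine Finset.sum_congr ?_ fun _ _ => rfl
  ext c
  simp only [Finset.mem_filter, Finset.mem_univ, true_and, Fintype.mem_piFinset]
  refine forall_congr' fun k => ?_
  split_ifs with hk <;> simp [hk]

lemma sum_split (A : Type*) [AddCommMonoid A] (f : ℕ → A) (m : ℕ) :
    ∑ x ∈ Finset.range (3 + 2 * m), f x
      = f 0 + f 1 + f 2 + ∑ k ∈ Finset.range m, (f (2*k+3) + f (2*k+4)) := by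
  induction m with
  | zero => simp [Finset.sum_range_succ]
  | succ m ih =>
    rw [show 3 + 2 * (m+1) = (3 + 2*m) + 1 + 1 by ring, Finset.sum_range_succ,
      Finset.sum_range_succ, ih, Finset.sum_range_succ,
      show 3 + 2*m + 1 = 2*m+4 by ring, show 3 + 2*m = 2*m+3 by ring]
    simp only [add_assoc]

noncomputable def sg (j : ℕ) : ExteriorAlgebra ℚ (Fin (4*j-1) → ℚ) := ∑ x, E j x

lemma sg_eq (j : ℕ) (hj : 2 ≤ j) (p0 : 0 < 4*j-1) (p1 : 1 < 4*j-1) (p2 : 2 < 4*j-1) :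
    sg j = E j ⟨0, p0⟩ + E j ⟨1, p1⟩ + E j ⟨2, p2⟩ + ∑ k, ι ℚ (bv j k) := by
  let f : ℕ → ExteriorAlgebra ℚ (Fin (4*j-1) → ℚ) := fun m => if h : m < 4*j-1 then E j ⟨m, h⟩ else 0
  have h1 : sg j = ∑ x : Fin (4*j-1), f x := by
    unfold sg; refine Finset.sum_congr rfl fun x _ => ?_
    simp [f]
  have h2 : ∑ k, ι ℚ (bv j k) = ∑ k : Fin (2*j-2), (f (2*k+3) + f (2*k+4)) := by
    refine Finset.sum_congr rfl fun k _ => ?_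
    have := k.isLt
    simp only [f]
    rw [dif_pos (by omega), dif_pos (by omega)]
    simp [bv, E, idx]
  rw [h1, h2, Fin.sum_univ_eq_sum_range f, Fin.sum_univ_eq_sum_range (fun k => f (2*k+3) + f (2*k+4)),
    show Finset.range (4*j-1) = Finset.range (3 + 2*(2*j-2)) from congrArg _ (by omega), sum_split]
  congr 1
  simp only [f]
  rw [dif_pos p0, dif_pos p1, dif_pos p2]

lemma pact_E (j : ℕ) (g : Equiv.Perm (Fin (4*j-1))) (x : Fin (4*j-1)) :
    LinearMap.funLeft ℚ ℚ ⇑g⁻¹ (ε j x) = ε j (g x) := by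
  funext y
  simp only [LinearMap.funLeft_apply, ε, Pi.single_apply]
  congr 1
  rw [Equiv.Perm.inv_eq_iff_eq]

lemma ρbase_eq (j : ℕ) (hj : 2 ≤ j) : ρbase j = ι ℚ (ε j ⟨2*j-1, by omega⟩) *
    ιMulti ℚ (2*j-1) (fun k => ε j ⟨2*j + (k:ℕ), by omega⟩) := by
  obtain ⟨n, rfl⟩ : ∃ n, j = n + 1 := ⟨j-1, by omega⟩
  rw [ιMulti_apply]
  unfold ρbase
  have : ∀ (f : Fin (2*(n+1)) → ExteriorAlgebra ℚ (Fin (4*(n+1)-1) → ℚ)),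
    (List.ofFn f).prod = f 0 * (List.ofFn fun k : Fin (2*(n+1)-1) => f (Fin.succ (n := 2*n+1) k)).prod := by
    intro f
    exact (congrArg List.prod (List.ofFn_succ (n := 2*n+1) (f := f))).trans List.prod_cons
  rw [this]
  congr 4
  funext k
  congr 3
  simp; omega

lemma pact_base (j : ℕ) (hj : 2 ≤ j) (m : Fin (4*j-1)) (hm : (m : ℕ) < 2*j - 1) :
    pact (4*j-1) (Equiv.swap m ⟨2*j-1, by omega⟩) (ρbase j) = E j m *
    ιMulti ℚ (2*j-1) (fun k => ε j ⟨2*j + (k:ℕ), by omega⟩) := by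
  rw [ρbase_eq j hj]
  unfold pact E
  rw [AlgHom.toLinearMap_apply, map_mul, map_apply_ι, map_apply_ιMulti, pact_E, Equiv.swap_apply_right]
  congr 2
  funext k
  simp only [Function.comp]
  rw [pact_E, Equiv.swap_apply_of_ne_of_ne]
  · intro h; have := congrArg Fin.val h; simp at this; omega
  · intro h; have := congrArg Fin.val h; simp at this; omega

lemma ρElt_eq (j : ℕ) (hj : 2 ≤ j) : ρElt j = sg j *
    ιMulti ℚ (2*j-1) (fun k => ε j ⟨2*j + (k:ℕ), by omega⟩) := by
  set T := ιMulti ℚ (2*j-1) (fun k => ε j ⟨2*j + (k:ℕ), by omega⟩) with hT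
  let f : ℕ → ExteriorAlgebra ℚ (Fin (4*j-1) → ℚ) :=
    fun m => if h : m < 4*j-1 then E j ⟨m, h⟩ * T else 0
  have h1 : sg j * T = ∑ x : Fin (4*j-1), f x := by
    unfold sg; rw [Finset.sum_mul]; refine Finset.sum_congr rfl fun x _ => ?_
    simp [f]
  have h2 : ρElt j = f (2*j-1) + ∑ x : Fin (2*j-1), f x := by
    unfold ρElt
    congr 1
    · simp only [f]
      rw [dif_pos (by omega), ρbase_eq j hj]; rfl
    · refine Finset.sum_congr rfl fun x _ => ?_
      simp only [f]
      rw [dif_pos (by omega), pact_base j hj _ x.isLt]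
  rw [h1, h2, Fin.sum_univ_eq_sum_range f, Fin.sum_univ_eq_sum_range f, add_comm,
    ← Finset.sum_range_succ]
  refine Finset.sum_subset ?_ ?_
  · intro x; simp only [Finset.mem_range]; omega
  · intro x hx hx'
    simp only [Finset.mem_range] at hx hx'
    simp only [f]
    rw [dif_pos hx, hT, E]
    have := ιMulti_succ_apply (R := ℚ) (n := 2*j-1)
      (Fin.cons (ε j ⟨x, hx⟩) (fun k : Fin (2*j-1) => ε j ⟨2*j + (k:ℕ), by omega⟩) : Fin (2*j-1).succ → _)
    simp only [Fin.cons_zero, Matrix.vecTail, Function.comp_def, Fin.cons_succ] at this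
    rw [← this]
    refine AlternatingMap.map_eq_zero_of_eq _ _ (i := 0) (j := Fin.succ ⟨x - 2*j, by omega⟩) ?_
      (Fin.succ_ne_zero _).symm
    simp only [Fin.cons_zero, Fin.cons_succ]
    congr 2
    omega

lemma pact_sg (j : ℕ) (g : Equiv.Perm (Fin (4*j-1))) :
    ExteriorAlgebra.map (LinearMap.funLeft ℚ ℚ ⇑g⁻¹) (sg j) = sg j := by
  unfold sg E
  rw [map_sum]
  simp only [map_apply_ι, pact_E]
  exact Equiv.sum_comp g (fun x => ι ℚ (ε j x))

lemma sg_mul_mem (j : ℕ) (hj : 2 ≤ j) (x : ExteriorAlgebra ℚ (Fin (4*j-1) → ℚ))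
    (hx : x ∈ LinearMap.range (ι ℚ (M := Fin (4*j-1) → ℚ)) ^ (2*j-1)) : sg j * x ∈ Ksub j := by
  have key : ((Ksub j).mkQ ∘ₗ LinearMap.mulLeft ℚ (sg j)).compAlternatingMap
      (ιMulti ℚ (2*j-1) (M := Fin (4*j-1) → ℚ)) = 0 := by
    refine Module.Basis.ext_alternating (Pi.basisFun ℚ (Fin (4*j-1))) fun v hv => ?_
    simp only [LinearMap.compAlternatingMap_apply, LinearMap.comp_apply, LinearMap.mulLeft_apply,
      AlternatingMap.zero_apply, Submodule.mkQ_apply, Submodule.Quotient.mk_eq_zero,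
      Pi.basisFun_apply]
    let a : Fin (2*j-1) ↪ Fin (4*j-1) := ⟨fun k => ⟨2*j + (k:ℕ), by omega⟩, fun p q h => by
      have := congrArg Fin.val h; simp at this; omega⟩
    have := Equiv.Perm.isMultiplyPretransitive (Fin (4*j-1)) (2*j-1)
    obtain ⟨g, hg⟩ := MulAction.exists_smul_eq (Equiv.Perm (Fin (4*j-1))) a ⟨v, hv⟩
    refine Submodule.subset_span ⟨g, ?_⟩
    simp only
    rw [ρElt_eq j hj]
    unfold pact
    rw [AlgHom.toLinearMap_apply, map_mul, pact_sg, map_apply_ιMulti]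
    congr 2
    funext k
    simp only [Function.comp]
    rw [pact_E]
    have : g (a k) = v k := by
      have := DFunLike.congr_fun hg k
      simpa using this
    rw [← this]; rfl
  have hx' : x ∈ Submodule.span ℚ (Set.range (ιMulti ℚ (2*j-1) (M := Fin (4*j-1) → ℚ))) := by
    rw [ιMulti_span_fixedDegree]; exact hx
  clear hx
  induction hx' using Submodule.span_induction with
  | mem x h =>
    obtain ⟨v, rfl⟩ := h
    have := DFunLike.congr_fun key v
    simpa using this
  | zero => simp
  | add x y hx hy h1 h2 =>
    rw [mul_add]
    exact add_mem h1 h2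
  | smul a x hx h =>
    rw [mul_smul_comm]
    exact Submodule.smul_mem _ _ h

lemma ι_anti {M : Type*} [AddCommGroup M] [Module ℚ M] (x y : M) :
    ι ℚ x * ι ℚ y = - (ι ℚ y * ι ℚ x) := eq_neg_of_add_eq_zero_left (ι_add_mul_swap x y)

lemma b_mul_not_mem (j : ℕ) (I : Finset (Fin (2*j-2))) (k : Fin (2*j-2)) (hk : k ∉ I) :
    ι ℚ (bv j k) * (List.ofFn (PI j I)).prod = 0 := by
  rw [ofFn_mul_shift _ _ (PI j I) (Function.update (PI j I) k 0) (fun l => if l ∈ I then 1 else -1) k]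
  · rw [List.prod_eq_zero, smul_zero]
    rw [List.mem_ofFn]; exact ⟨k, by simp⟩
  · intro l _
    unfold PI
    split_ifs
    · simp
    · rw [ι_anti]; simp
  · simp [PI, hk]
  · intro l hl; simp [hl]

lemma b_mul_mem (j : ℕ) (I : Finset (Fin (2*j-2))) (k : Fin (2*j-2)) (hk : k ∈ I) :
    ι ℚ (bv j k) * (List.ofFn (PI j I)).prod =
      (∏ l ∈ Finset.univ.filter (fun l => l < k), (if l ∈ I then 1 else -1 : ℚ)) •
        (List.ofFn (PI j (I.erase k))).prod := by
  rw [ofFn_mul_shift _ _ (PI j I) (PI j (I.erase k)) (fun l => if l ∈ I then 1 else -1) k]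
  · intro l _
    unfold PI
    split_ifs
    · simp
    · rw [ι_anti]; simp
  · simp [PI, hk]
  · intro l hl; simp [hl, PI]

lemma P_mem (j : ℕ) (I : Finset (Fin (2*j-2))) :
    (List.ofFn (PI j I)).prod ∈ LinearMap.range (ι ℚ (M := Fin (4*j-1) → ℚ)) ^ (2*j-2 - I.card) := by
  have := SetLike.list_prod_ofFn_mem_graded
    (A := fun n : ℕ => LinearMap.range (ι ℚ (M := Fin (4*j-1) → ℚ)) ^ n)
    (fun k => if k ∈ I then 0 else 1) (PI j I) (by
      intro k
      unfold PI
      split_ifs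
      · simp
      · simp)
  convert this using 2
  rw [List.sum_ofFn]
  have h : ∑ k : Fin (2*j-2), (if k ∈ I then 0 else 1) = (Finset.univ.filter (fun k => k ∉ I)).card := by
    rw [Finset.card_filter]; refine Finset.sum_congr rfl fun k _ => ?_
    split_ifs <;> simp_all
  rw [h, Finset.filter_not, Finset.card_sdiff]
  simp

end helpers

/-- For `j ≥ 2` and every loop index `i` (`1 ≤ i ≤ 2j−2`, here `0`-based), the
vector `(−1)^{i−1} e₁∧e₂∧e₃∧S_i − e₁∧e₂∧e₃∧S₁` lies in `K`. -/
theorem stmt9 (j : ℕ) (hj : 2 ≤ j) (i : Fin (2*j-2)) :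
    ((-1 : ℚ)^(i : ℕ)) •
        (E j ⟨0, by omega⟩ * E j ⟨1, by omega⟩ * E j ⟨2, by omega⟩ * SI j {i})
      - E j ⟨0, by omega⟩ * E j ⟨1, by omega⟩ * E j ⟨2, by omega⟩ * SI j {⟨0, by omega⟩}
      ∈ Ksub j := by
  classical
  by_cases hi : i = ⟨0, by omega⟩
  · subst hi; simp
  set z : Fin (2*j-2) := ⟨0, by omega⟩ with hz
  set Q := E j ⟨0, by omega⟩ * E j ⟨1, by omega⟩ * E j ⟨2, by omega⟩ with hQ
  have hlt : z < i := by
    rw [Fin.lt_def]; have : (i : ℕ) ≠ 0 := fun h => hi (Fin.ext h)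
    simp [hz]; omega
  set P := (List.ofFn (PI j {z, i})).prod with hP
  have hmem : sg j * (Q * P) ∈ Ksub j := by
    apply sg_mul_mem j hj
    have h3 : Q ∈ LinearMap.range (ExteriorAlgebra.ι ℚ (M := Fin (4*j-1) → ℚ)) ^ 3 := by
      rw [pow_succ, pow_two]
      exact Submodule.mul_mem_mul (Submodule.mul_mem_mul ⟨_, rfl⟩ ⟨_, rfl⟩) ⟨_, rfl⟩
    have h4 := P_mem j {z, i}
    rw [Finset.card_pair (Ne.symm hi)] at h4
    have := Submodule.mul_mem_mul h3 h4
    rw [← pow_add] at this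
    have hlt' := Fin.lt_def.1 hlt
    have h5 : 3 + (2*j-2-2) = 2*j-1 := by have := i.isLt; omega
    rwa [h5] at this
  have hbQ : ∀ w, ExteriorAlgebra.ι ℚ w * Q = - (Q * ExteriorAlgebra.ι ℚ w) := by
    intro w
    simp only [hQ, E]
    rw [← mul_assoc, ← mul_assoc, ι_anti w, neg_mul, neg_mul, mul_assoc _ (ExteriorAlgebra.ι ℚ w),
      ι_anti w, mul_neg, neg_mul, ← mul_assoc, mul_assoc _ (ExteriorAlgebra.ι ℚ w),
      ι_anti w, mul_neg, ← mul_assoc, neg_neg]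
  have hz0 : E j ⟨0, by omega⟩ * Q = 0 := by
    simp only [hQ, E]
    rw [← mul_assoc, ← mul_assoc, ExteriorAlgebra.ι_sq_zero, zero_mul, zero_mul]
  have hz1 : E j ⟨1, by omega⟩ * Q = 0 := by
    have := hbQ (ε j ⟨1, by omega⟩)
    simp only [hQ, E] at this ⊢
    rw [← mul_assoc, ← mul_assoc, ι_anti, neg_mul, neg_mul, mul_assoc (ExteriorAlgebra.ι ℚ _) (ExteriorAlgebra.ι ℚ _)  (ExteriorAlgebra.ι ℚ _),
      ExteriorAlgebra.ι_sq_zero]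
    simp
  have hz2 : E j ⟨2, by omega⟩ * Q = 0 := by
    have := hbQ (ε j ⟨2, by omega⟩)
    rw [E, this, hQ, E, E, E, mul_assoc _ (ExteriorAlgebra.ι ℚ _) (ExteriorAlgebra.ι ℚ _), ExteriorAlgebra.ι_sq_zero]
    simp
  have hsum : ∑ k, ExteriorAlgebra.ι ℚ (bv j k) * P
      = SI j {i} - ((-1 : ℚ)^(i:ℕ)) • SI j {z} := by
    rw [← Finset.sum_subset (Finset.subset_univ {z, i}), Finset.sum_pair (Ne.symm hi)]
    · rw [hP, b_mul_mem _ _ _ (by simp), b_mul_mem _ _ _ (by simp), SI_eq, SI_eq, sub_eq_add_neg,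
        ← neg_smul]
      have e1 : ({z, i} : Finset (Fin (2*j-2))).erase z = {i} := by
        ext x; simp only [Finset.mem_erase, Finset.mem_insert, Finset.mem_singleton]
        constructor
        · tauto
        · rintro rfl; exact ⟨hi, Or.inr rfl⟩
      have e2 : ({z, i} : Finset (Fin (2*j-2))).erase i = {z} := by
        ext x; simp only [Finset.mem_erase, Finset.mem_insert, Finset.mem_singleton]
        constructor
        · tauto
        · rintro rfl; exact ⟨Ne.symm hi, Or.inl rfl⟩
      rw [e1, e2]
      congr 1
      · rw [Finset.filter_false_of_mem]
        · simp
        · intro x _; simp [hz, Fin.lt_def]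
      · congr 1
        have : ∀ l ∈ Finset.univ.filter (fun l => l < i), (if l ∈ ({z, i} : Finset (Fin (2*j-2))) then 1 else -1 : ℚ)
            = (if l = z then -1 else 1) * (-1) := by
          intro l hl
          have : l ≠ i := (Finset.mem_filter.1 hl).2.ne
          by_cases h : l = z <;> simp [h, this]
        rw [Finset.prod_congr rfl this, Finset.prod_mul_distrib, Finset.prod_ite_eq', if_pos (by simp [hlt])]
        have hc : (Finset.univ.filter (fun l => l < i)).card = (i : ℕ) := by
          rw [← Fin.card_Iio i]; congr 1; ext x; simp
        simp [hc]
    · intro k _ hk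
      exact b_mul_not_mem _ _ _ hk
  have hfin : sg j * (Q * P) = - (Q * SI j {i} - ((-1 : ℚ)^(i:ℕ)) • (Q * SI j {z})) := by
    rw [sg_eq j hj (by omega) (by omega) (by omega), ← mul_assoc]
    simp only [add_mul]
    rw [hz0, hz1, hz2, Finset.sum_mul]
    simp only [hbQ, zero_mul, zero_add]
    rw [Finset.sum_mul]
    simp only [neg_mul, mul_assoc]
    rw [Finset.sum_neg_distrib, ← Finset.mul_sum, hsum, mul_sub, mul_smul_comm]
  have := Submodule.smul_mem _ (-(-1 : ℚ)^(i:ℕ)) hmem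
  rw [hfin] at this
  convert this using 1
  rw [smul_neg, neg_smul, neg_neg, smul_sub, smul_smul, ← mul_pow]
  simp
end

section
/- Let r ≥ 2. The subspace of Λ^{r−2} U_{2r−2} consisting of all vectors fixed by each of the r−1 commuting transpositions (1 2), (3 4), …, (2r−3 2r−2) of S_{2r−2} is exactly one-dimensional. (Equivalently: the hook representation V_{r,1^{r−2}} of S_{2r−2} has a unique one-dimensional subspace of invariants for the subgroup (S_2)^{r−1} generated by these transpositions.) -/
noncomputable section helpers

open CliffordAlgebra in
lemma map_transv {V : Type*} [AddCommGroup V] [Module ℚ V] (φ : Module.Dual ℚ V) (d : V) (t : ℚ)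
    (f : V →ₗ[ℚ] V) (hf : ∀ v, f v = v - (t * φ v) • d) (x : ExteriorAlgebra ℚ V) :
    ExteriorAlgebra.map f x =
      x - t • (ExteriorAlgebra.ι ℚ d *
        (contractLeft (Q := (0 : QuadraticForm ℚ V)) φ x : ExteriorAlgebra ℚ V)) := by
  induction x using CliffordAlgebra.left_induction with
  | algebraMap r =>
    rw [contractLeft_algebraMap, mul_zero, smul_zero, sub_zero]
    exact AlgHom.commutes _ r
  | add x y hx hy =>
    rw [map_add, map_add, hx, hy, mul_add, smul_add]; abel
  | ι_mul x m hx =>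
    rw [contractLeft_ι_mul, map_mul, hx]
    change ExteriorAlgebra.map f (ExteriorAlgebra.ι ℚ m) * _ = _
    rw [ExteriorAlgebra.map_apply_ι, hf, map_sub, map_smul]
    generalize (contractLeft φ x : ExteriorAlgebra ℚ V) = c
    change _ = ExteriorAlgebra.ι ℚ m * x - t • (ExteriorAlgebra.ι ℚ d *
      (φ m • x - ExteriorAlgebra.ι ℚ m * c))
    have h1 : ExteriorAlgebra.ι ℚ d * (ExteriorAlgebra.ι ℚ d * c) = 0 := by
      rw [← mul_assoc, ExteriorAlgebra.ι_sq_zero, zero_mul]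
    have h2 : ExteriorAlgebra.ι ℚ d * (ExteriorAlgebra.ι ℚ m * c) =
        - (ExteriorAlgebra.ι ℚ m * (ExteriorAlgebra.ι ℚ d * c)) := by
      rw [← mul_assoc, ← mul_assoc, ← neg_mul]
      congr 1
      exact eq_neg_of_add_eq_zero_left (ExteriorAlgebra.ι_add_mul_swap d m)
    simp only [sub_mul, mul_sub, smul_mul_assoc, mul_smul_comm, h1, h2, smul_zero, smul_sub,
      smul_smul, smul_neg]
    abel

lemma map_proj_fixed {V I : Type*} [AddCommGroup V] [Module ℚ V] (φ : I → Module.Dual ℚ V)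
    (d : I → V) (hφ : ∀ i j, i ≠ j → φ i (d j) = 0) (s : I → V →ₗ[ℚ] V)
    (hs : ∀ i v, s i v = v - (2 * φ i v) • d i) (x : ExteriorAlgebra ℚ V)
    (hx : ∀ i, ExteriorAlgebra.map (s i) x = x) (S : Finset I) (P : V →ₗ[ℚ] V)
    (hP : ∀ v, P v = v - ∑ i ∈ S, φ i v • d i) :
    ExteriorAlgebra.map P x = x := by
  classical
  induction S using Finset.induction_on generalizing P with
  | empty =>
    have : P = LinearMap.id := by ext v; simp [hP]
    rw [this, ExteriorAlgebra.map_id]; rfl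
  | insert a S ha ih =>
    let R : V →ₗ[ℚ] V := LinearMap.id - (φ a).smulRight (d a)
    let P' : V →ₗ[ℚ] V := LinearMap.id - ∑ i ∈ S, (φ i).smulRight (d i)
    have hP' : ∀ v, P' v = v - ∑ i ∈ S, φ i v • d i := by
      intro v; simp [P', LinearMap.sum_apply]
    have hPR : P = R ∘ₗ P' := by
      ext v
      have : φ a (∑ i ∈ S, φ i v • d i) = 0 := by
        rw [map_sum]
        refine Finset.sum_eq_zero fun i hi => ?_
        rw [map_smul, hφ a i (by rintro rfl; exact ha hi), smul_zero]
      simp only [LinearMap.comp_apply, hP', hP, R, LinearMap.sub_apply, LinearMap.id_apply,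
        LinearMap.smulRight_apply, map_sub, this, Finset.sum_insert ha, zero_smul, sub_zero]
      abel
    rw [hPR, ← ExteriorAlgebra.map_comp_map, AlgHom.comp_apply, ih P' hP']
    have h1 := map_transv (φ a) (d a) 2 (s a) (hs a) x
    have h2 := map_transv (φ a) (d a) 1 R (by intro v; simp [R]) x
    rw [hx] at h1
    have h3 := sub_eq_self.mp h1.symm
    rw [smul_eq_zero_iff_right (by norm_num)] at h3
    rw [h2, h3, smul_zero, sub_zero]

lemma sum_pairs {N n : ℕ} (hN : N = 2 * n) (f : Fin N → ℚ) :
    ∑ k, f k = ∑ i : Fin n, (f ⟨2 * (i : ℕ), by omega⟩ + f ⟨2 * (i : ℕ) + 1, by omega⟩) := by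
  obtain rfl : N = n * 2 := by omega
  rw [← Equiv.sum_comp (finProdFinEquiv (m := n) (n := 2)), Fintype.sum_prod_type]
  refine Finset.sum_congr rfl fun i _ => ?_
  rw [Fin.sum_univ_two]
  congr 2 <;> ext <;> simp [finProdFinEquiv] <;> omega

lemma finrank_U_s12 (m : ℕ) : Module.finrank ℚ (U (m + 1)) = m := by
  have h := (sumMap (m + 1)).finrank_range_add_finrank_ker
  have hs : LinearMap.range (sumMap (m + 1)) = ⊤ := by
    rw [LinearMap.range_eq_top]
    intro q
    exact ⟨Pi.single 0 q, by simp [sumMap]⟩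
  rw [hs] at h
  simp at h
  change 1 + Module.finrank ℚ (U (m + 1)) = m + 1 at h
  omega

/-- The doubling map `U_n → U_{2n}`. -/
def dbl {N n : ℕ} (hN : N = 2 * n) : U n →ₗ[ℚ] U N :=
  (LinearMap.funLeft ℚ ℚ (fun k : Fin N => (⟨(k : ℕ) / 2, by omega⟩ : Fin n))).restrict (by
    intro y hy
    rw [mem_U] at hy ⊢
    rw [sum_pairs hN]
    have h : ∀ i : Fin n, (2 * (i : ℕ) + 1) / 2 = i := by intro i; omega
    simp [LinearMap.funLeft_apply, Finset.sum_add_distrib, hy, h])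

/-- The averaging map `U_{2n} → U_n`. -/
def avg {N n : ℕ} (hN : N = 2 * n) : U N →ₗ[ℚ] U n :=
  ((1 / 2 : ℚ) • (LinearMap.funLeft ℚ ℚ (fun i : Fin n => (⟨2 * (i : ℕ), by omega⟩ : Fin N)) +
    LinearMap.funLeft ℚ ℚ (fun i : Fin n => (⟨2 * (i : ℕ) + 1, by omega⟩ : Fin N)))).restrict (by
    intro y hy
    rw [mem_U] at hy ⊢
    rw [sum_pairs hN] at hy
    simp [LinearMap.funLeft_apply, ← mul_add, ← Finset.mul_sum, hy])

/-- The difference vector `e_{2i} - e_{2i+1}`. -/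
def dif {N n : ℕ} (hN : N = 2 * n) (i : Fin n) : U N :=
  ⟨fun k => if (k : ℕ) = 2 * i then 1 else if (k : ℕ) = 2 * i + 1 then -1 else 0, by
    rw [mem_U, sum_pairs hN]
    refine Finset.sum_eq_zero fun j _ => ?_
    simp only
    split_ifs <;> first | omega | norm_num⟩

/-- The half difference functional. -/
def phi {N n : ℕ} (hN : N = 2 * n) (i : Fin n) : Module.Dual ℚ (U N) :=
  ((1 / 2 : ℚ) • (LinearMap.proj (R := ℚ) (φ := fun _ : Fin N => ℚ) (⟨2 * (i : ℕ), by omega⟩ : Fin N) -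
    LinearMap.proj (R := ℚ) (φ := fun _ : Fin N => ℚ) (⟨2 * (i : ℕ) + 1, by omega⟩ : Fin N))) ∘ₗ (U N).subtype

lemma phi_apply {N n : ℕ} (hN : N = 2 * n) (i : Fin n) (x : U N) :
    phi hN i x = 1 / 2 * (x.1 ⟨2 * (i : ℕ), by omega⟩ - x.1 ⟨2 * (i : ℕ) + 1, by omega⟩) := by
  simp [phi]

lemma dbl_apply {N n : ℕ} (hN : N = 2 * n) (y : U n) (k : Fin N) :
    (dbl hN y).1 k = y.1 ⟨(k : ℕ) / 2, by omega⟩ := rfl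

lemma avg_apply {N n : ℕ} (hN : N = 2 * n) (x : U N) (i : Fin n) :
    (avg hN x).1 i =
      1 / 2 * (x.1 ⟨2 * (i : ℕ), by omega⟩ + x.1 ⟨2 * (i : ℕ) + 1, by omega⟩) := rfl

lemma avg_dbl {N n : ℕ} (hN : N = 2 * n) : avg hN ∘ₗ dbl hN = LinearMap.id := by
  refine LinearMap.ext fun y => Subtype.ext (funext fun i => ?_)
  have h : ∀ i : Fin n, (2 * (i : ℕ) + 1) / 2 = i := by intro i; omega
  rw [LinearMap.comp_apply, avg_apply, dbl_apply, dbl_apply]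
  simp [h]; ring

lemma phi_dif {N n : ℕ} (hN : N = 2 * n) (i j : Fin n) (hij : i ≠ j) :
    phi hN i (dif hN j) = 0 := by
  have : (i : ℕ) ≠ j := fun h => hij (Fin.ext h)
  rw [phi_apply]
  simp only [dif]
  split_ifs <;> first | omega | norm_num

lemma dbl_avg {N n : ℕ} (hN : N = 2 * n) (x : U N) :
    (dbl hN ∘ₗ avg hN) x = x - ∑ i, phi hN i x • dif hN i := by
  refine Subtype.ext (funext fun k => ?_)
  rw [LinearMap.comp_apply, dbl_apply, avg_apply]
  have e : (x - ∑ i, phi hN i x • dif hN i).1 k =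
      x.1 k - ∑ i, phi hN i x * (dif hN i).1 k := by
    simp [Finset.sum_apply]
  rw [e, Finset.sum_eq_single (⟨(k : ℕ) / 2, by omega⟩ : Fin n)]
  · rw [phi_apply]
    simp only [dif]
    rcases Nat.even_or_odd' (k : ℕ) with ⟨c, hc | hc⟩
    · have h1 : (⟨2 * ((k : ℕ) / 2), by omega⟩ : Fin N) = k := Fin.ext (by simp; omega)
      rw [if_pos (by omega), h1]; ring
    · have h1 : (⟨2 * ((k : ℕ) / 2) + 1, by omega⟩ : Fin N) = k := Fin.ext (by simp; omega)
      rw [if_neg (by omega), if_pos (by omega), h1]; ring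
  · intro i _ hi
    have : (i : ℕ) ≠ (k : ℕ) / 2 := fun h => hi (Fin.ext h)
    simp only [dif]
    rw [if_neg (by omega), if_neg (by omega), mul_zero]
  · simp

lemma permU_apply {N : ℕ} (σ : Equiv.Perm (Fin N)) (x : U N) (k : Fin N) :
    (permU N σ x).1 k = x.1 (σ⁻¹ k) := rfl

lemma permU_swap {N n : ℕ} (hN : N = 2 * n) (i : Fin n) (x : U N) :
    permU N (Equiv.swap ⟨2 * (i : ℕ), by omega⟩ ⟨2 * (i : ℕ) + 1, by omega⟩) x =
      x - (2 * phi hN i x) • dif hN i := by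
  refine Subtype.ext (funext fun k => ?_)
  have e : (x - (2 * phi hN i x) • dif hN i).1 k =
      x.1 k - (2 * phi hN i x) * (dif hN i).1 k := by simp
  rw [permU_apply, e, phi_apply, Equiv.swap_inv, Equiv.swap_apply_def]
  simp only [dif]
  by_cases h1 : (k : ℕ) = 2 * i
  · have h2 : k = ⟨2 * (i : ℕ), by have := i.isLt; clear h1 e; omega⟩ := Fin.ext h1
    clear e
    subst h2
    simp
  · by_cases h3 : (k : ℕ) = 2 * i + 1
    · have h2 : k = ⟨2 * (i : ℕ) + 1, by have := i.isLt; clear h1 h3 e; omega⟩ := Fin.ext h3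
      clear e
      subst h2
      simp
    · simp [Fin.ext_iff, h1, h3]

lemma phi_dbl {N n : ℕ} (hN : N = 2 * n) (i : Fin n) (y : U n) : phi hN i (dbl hN y) = 0 := by
  have h : ∀ i : Fin n, (2 * (i : ℕ) + 1) / 2 = i := by intro i; omega
  rw [phi_apply, dbl_apply, dbl_apply]
  simp [h]

lemma map_mem_power {V W : Type*} [AddCommGroup V] [Module ℚ V] [AddCommGroup W] [Module ℚ W]
    (f : V →ₗ[ℚ] W) (k : ℕ) (x : ExteriorAlgebra ℚ V) (hx : x ∈ ⋀[ℚ]^k V) :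
    ExteriorAlgebra.map f x ∈ ⋀[ℚ]^k W := by
  have h : (⋀[ℚ]^k V).map (ExteriorAlgebra.map f).toLinearMap ≤ ⋀[ℚ]^k W := by
    rw [ExteriorAlgebra.exteriorPower, Submodule.map_pow]
    refine pow_le_pow_left' ?_ k
    rintro _ ⟨_, ⟨v, rfl⟩, rfl⟩
    exact ⟨f v, by simp⟩
  exact h ⟨x, hx, rfl⟩

lemma mem_eigen_one {N : ℕ} (σ : Equiv.Perm (Fin N)) (x : ExteriorAlgebra ℚ (U N)) :
    x ∈ eigen (act N σ) 1 ↔ ExteriorAlgebra.map (permU N σ) x = x := by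
  simp [eigen, act, LinearMap.mem_ker, sub_eq_zero]

lemma main_eq {N n : ℕ} (hN : N = 2 * n) (k : ℕ) :
    ((⋀[ℚ]^k ↥(U N)) ⊓ ⨅ (i : Fin n),
      eigen (act N (Equiv.swap (⟨2 * (i : ℕ), by omega⟩ : Fin N) ⟨2 * (i : ℕ) + 1, by omega⟩)) 1)
    = (⋀[ℚ]^k ↥(U n)).map (ExteriorAlgebra.map (dbl hN)).toLinearMap := by
  ext x
  simp only [Submodule.mem_inf, Submodule.mem_iInf, mem_eigen_one, Submodule.mem_map]
  constructor
  · rintro ⟨hx, hi⟩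
    refine ⟨ExteriorAlgebra.map (avg hN) x, map_mem_power _ _ _ hx, ?_⟩
    have := map_proj_fixed (phi hN) (dif hN) (phi_dif hN) _ (permU_swap hN) x hi Finset.univ
      (dbl hN ∘ₗ avg hN) (dbl_avg hN)
    rw [← ExteriorAlgebra.map_comp_map] at this
    exact this
  · rintro ⟨y, hy, rfl⟩
    refine ⟨map_mem_power _ _ _ hy, fun i => ?_⟩
    change ExteriorAlgebra.map _ (ExteriorAlgebra.map _ y) = ExteriorAlgebra.map _ y
    rw [← AlgHom.comp_apply, ExteriorAlgebra.map_comp_map]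
    congr 2
    refine LinearMap.ext fun v => ?_
    rw [LinearMap.comp_apply, permU_swap hN, phi_dbl]
    simp

lemma main_finrank {N n : ℕ} (hN : N = 2 * n) (k : ℕ) (hn : n = k + 1) :
    Module.finrank ℚ ↥((⋀[ℚ]^k ↥(U N)) ⊓ ⨅ (i : Fin n),
      eigen (act N (Equiv.swap (⟨2 * (i : ℕ), by omega⟩ : Fin N) ⟨2 * (i : ℕ) + 1, by omega⟩)) 1)
    = 1 := by
  rw [main_eq hN]
  subst hn
  have hinj : Function.Injective (ExteriorAlgebra.map (dbl hN)).toLinearMap :=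
    ExteriorAlgebra.map_injective ⟨avg hN, avg_dbl hN⟩
  rw [← (Submodule.equivMapOfInjective _ hinj _).finrank_eq, exteriorPower.finrank_eq, finrank_U_s12,
    Nat.choose_self]

end helpers

/-- For `r ≥ 2`, the subspace of `Λ^{r−2} U_{2r−2}` of vectors fixed by each of
the `r−1` commuting transpositions `(1 2), (3 4), …, (2r−3 2r−2)` of `S_{2r−2}` is exactly
one-dimensional. -/
theorem stmt12 (r : ℕ) (hr : 2 ≤ r) :
    Module.finrank ℚ
      ↥((⋀[ℚ]^(r-2) ↥(U (2*r-2))) ⊓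
        ⨅ (i : Fin (r-1)),
          eigen (act (2*r-2)
            (Equiv.swap (⟨2*(i : ℕ), by omega⟩ : Fin (2*r-2)) ⟨2*(i : ℕ)+1, by omega⟩)) 1) = 1 := by
  exact main_finrank (by omega) (r - 2) (by omega)
end
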